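/- Consider a parity bidding game G = (V, E, p) and a vertex v ∈ V, and write Thresh₁(v) = Thresh(v) and Thresh₂(v) = 1 − Thresh(v). For each i ∈ {1,2}, if Player i's initial budget exceeds Threshᵢ(v), then Player i has a memoryless winning strategy from v, that is, a winning strategy whose bid and chosen move at each round depend only on the current vertex and on Player i's current budget. -/

import Mathlib

open scoped Classical

/-! ### Bidding games: the basic model -/

/-- One round of a bidding game: the vertex the token was moved to, the winning bid,
and whether Player 1 won the bidding. -/
structure BidRound (V : Type) where
  dest : V
  bid : ℝ
  p1Won : Bool

/-- A history: the initial vertex together with the list of rounds played so far. -/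
structure Hist (V : Type) where
  init : V
  rounds : List (BidRound V)

/-- The vertex currently occupied by the token. -/
def Hist.cur {V : Type} (h : Hist V) : V :=
  h.rounds.getLast?.elim h.init BidRound.dest

/-- The net payment of Player 1 so far (bids paid upon winning minus bids received). -/
def Hist.pay1 {V : Type} (h : Hist V) : ℝ :=
  (h.rounds.map (fun r => if r.p1Won then r.bid else -r.bid)).sum

/-- The net payment of Player 2 so far. -/
def Hist.pay2 {V : Type} (h : Hist V) : ℝ := -h.pay1

/-- The sum of the weights of all vertices visited so far (including the current one). -/
def Hist.energyAll {V : Type} (w : V → ℤ) (h : Hist V) : ℤ :=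
  w h.init + (h.rounds.map (fun r => w r.dest)).sum

/-- A strategy: maps a history to a bid and the vertex to move to upon winning. -/
def Strat (V : Type) := Hist V → ℝ × V

/-- A tie-breaking mechanism: decides at each history whether Player 1 wins a tie. -/
def TieBreak (V : Type) := Hist V → Bool

/-- A bidding game: a finite directed graph in which every vertex has an outgoing edge. -/
structure BiddingGame (V : Type) [Fintype V] where
  E : V → V → Prop
  total : ∀ v, ∃ u, E v u

/-- One round of play: both players bid; the higher bidder (Player 1 upon a tie won by
the tie-breaking mechanism) pays his bid to the other player and moves the token. -/
noncomputable def extend {V : Type} (tb : TieBreak V) (f1 f2 : Strat V) (h : Hist V) : Hist V :=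
  if (f2 h).1 < (f1 h).1 ∨ ((f1 h).1 = (f2 h).1 ∧ tb h = true) then
    ⟨h.init, h.rounds ++ [⟨(f1 h).2, (f1 h).1, true⟩]⟩
  else
    ⟨h.init, h.rounds ++ [⟨(f2 h).2, (f2 h).1, false⟩]⟩

/-- The history after `n` rounds, starting at `v0`. -/
noncomputable def play {V : Type} (tb : TieBreak V) (f1 f2 : Strat V) (v0 : V) : ℕ → Hist V
  | 0 => ⟨v0, []⟩
  | n + 1 => extend tb f1 f2 (play tb f1 f2 v0 n)

/-- The vertex occupied after `n` rounds. -/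
noncomputable def visit {V : Type} (tb : TieBreak V) (f1 f2 : Strat V) (v0 : V) (n : ℕ) : V :=
  (play tb f1 f2 v0 n).cur

/-- The energy (sum of weights) of the prefix of length `n` of the outcome. -/
noncomputable def energy {V : Type} (w : V → ℤ) (tb : TieBreak V) (f1 f2 : Strat V) (v0 : V)
    (n : ℕ) : ℤ :=
  ∑ i ∈ Finset.range n, w (visit tb f1 f2 v0 i)

/-- Player 1's strategy is legal w.r.t. the initial budget `B`: along any play, his bids
are nonnegative, never exceed his current budget, and his moves follow edges. -/
def Legal1 {V : Type} [Fintype V] (G : BiddingGame V) (f1 : Strat V) (B : ℝ) : Prop :=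
  ∀ (tb : TieBreak V) (f2 : Strat V) (v0 : V) (n : ℕ),
    0 ≤ (f1 (play tb f1 f2 v0 n)).1 ∧
    (f1 (play tb f1 f2 v0 n)).1 ≤ B - (play tb f1 f2 v0 n).pay1 ∧
    G.E (play tb f1 f2 v0 n).cur (f1 (play tb f1 f2 v0 n)).2

/-- Player 2's strategy is legal w.r.t. the initial budget `B`. -/
def Legal2 {V : Type} [Fintype V] (G : BiddingGame V) (f2 : Strat V) (B : ℝ) : Prop :=
  ∀ (tb : TieBreak V) (f1 : Strat V) (v0 : V) (n : ℕ),
    0 ≤ (f2 (play tb f1 f2 v0 n)).1 ∧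
    (f2 (play tb f1 f2 v0 n)).1 ≤ B - (play tb f1 f2 v0 n).pay2 ∧
    G.E (play tb f1 f2 v0 n).cur (f2 (play tb f1 f2 v0 n)).2

/-- A memoryless strategy: its action depends only on the current vertex and the
player's current budget (equivalently, the net payments so far). -/
def Memoryless {V : Type} (f : Strat V) : Prop :=
  ∀ h h' : Hist V, h.cur = h'.cur → h.pay1 = h'.pay1 → f h = f h'

/-- A memoryless strategy in a mean-payoff game: its action depends only on the current
vertex, the player's current budget, and the current energy level. -/
def MemorylessE {V : Type} (w : V → ℤ) (f : Strat V) : Prop :=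
  ∀ h h' : Hist V, h.cur = h'.cur → h.pay1 = h'.pay1 →
    h.energyAll w = h'.energyAll w → f h = f h'

/-- A constant-memory strategy for Player 2 (Max): the action depends only on the current
vertex, Player 2's current budget, the current energy level, and a memory state ranging
over a finite set (of size independent of the history), updated round by round. -/
def FiniteMemory2 {V : Type} (w : V → ℤ) (f : Strat V) (B : ℝ) : Prop :=
  ∃ (M : Type) (_ : Fintype M) (m0 : M) (upd : M → BidRound V → M)
    (act : V → ℝ → ℤ → M → ℝ × V),
    ∀ h : Hist V, f h = act h.cur (B - h.pay2) (h.energyAll w) (h.rounds.foldl upd m0)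

/-- Strong connectivity of the arena. -/
def StronglyConnected {V : Type} [Fintype V] (G : BiddingGame V) : Prop :=
  ∀ v u : V, Relation.ReflTransGen G.E v u

/-! ### Richman games -/

/-- The successors of `v`. -/
noncomputable def BiddingGame.adj {V : Type} [Fintype V] (G : BiddingGame V) (v : V) :
    Finset V :=
  Finset.univ.filter (fun u => G.E v u)

lemma BiddingGame.adj_nonempty {V : Type} [Fintype V] (G : BiddingGame V) (v : V) :
    (G.adj v).Nonempty := by
  obtain ⟨u, hu⟩ := G.total v
  exact ⟨u, by simpa [BiddingGame.adj] using hu⟩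

/-- The Richman function `R(v, i)`. -/
noncomputable def Rfun {V : Type} [Fintype V] (G : BiddingGame V) (vR vS : V) :
    ℕ → V → ℝ
  | 0, v => if v = vR then 0 else 1
  | i + 1, v =>
      if v = vR then 0
      else if v = vS then 1
      else ((G.adj v).sup' (G.adj_nonempty v) (Rfun G vR vS i) +
            (G.adj v).inf' (G.adj_nonempty v) (Rfun G vR vS i)) / 2

/-- The limit Richman function `R(v) = lim_i R(v, i)`; since `i ↦ R(v, i)` is
nonincreasing, the limit equals the infimum. -/
noncomputable def Rlim {V : Type} [Fintype V] (G : BiddingGame V) (vR vS : V)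
    (v : V) : ℝ :=
  ⨅ i : ℕ, Rfun G vR vS i v

/-- Player 1 wins an outcome of a Richman game: `vR` is reached, and `vS` is not
reached before that (the game ends once a target is reached). -/
def Win1Richman {V : Type} (tb : TieBreak V) (f1 f2 : Strat V) (v0 vR vS : V) : Prop :=
  ∃ n, visit tb f1 f2 v0 n = vR ∧ ∀ m < n, visit tb f1 f2 v0 m ≠ vS

/-- Player 2 wins an outcome of a Richman game: `vS` is reached first, or no target is
ever reached. -/
def Win2Richman {V : Type} (tb : TieBreak V) (f1 f2 : Strat V) (v0 vR vS : V) : Prop :=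
  (∃ n, visit tb f1 f2 v0 n = vS ∧ ∀ m < n, visit tb f1 f2 v0 m ≠ vR) ∨
  (∀ n, visit tb f1 f2 v0 n ≠ vR ∧ visit tb f1 f2 v0 n ≠ vS)

/-- Player 1 has a winning strategy in the Richman game from `v0` with budget `B`. -/
def Win1RichmanFrom {V : Type} [Fintype V] (G : BiddingGame V) (vR vS v0 : V)
    (B : ℝ) : Prop :=
  ∀ tb : TieBreak V, ∃ f1 : Strat V, Legal1 G f1 B ∧
    ∀ f2 : Strat V, Legal2 G f2 (1 - B) → Win1Richman tb f1 f2 v0 vR vS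

/-- Player 2 has a winning strategy in the Richman game from `v0` with budget `B`. -/
def Win2RichmanFrom {V : Type} [Fintype V] (G : BiddingGame V) (vR vS v0 : V)
    (B : ℝ) : Prop :=
  ∀ tb : TieBreak V, ∃ f2 : Strat V, Legal2 G f2 B ∧
    ∀ f1 : Strat V, Legal1 G f1 (1 - B) → Win2Richman tb f1 f2 v0 vR vS

/-- `t` is a threshold budget at `v` in the Richman game. -/
def IsThreshRichman {V : Type} [Fintype V] (G : BiddingGame V) (vR vS v : V)
    (t : ℝ) : Prop :=
  (∀ B : ℝ, B ≤ 1 → t < B → Win1RichmanFrom G vR vS v B) ∧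
  (∀ B : ℝ, B ≤ 1 → 1 - t < B → Win2RichmanFrom G vR vS v B)

/-! ### Richman games with target sets -/

def Win1RichmanSet {V : Type} (tb : TieBreak V) (f1 f2 : Strat V) (v0 : V)
    (R S : Set V) : Prop :=
  ∃ n, visit tb f1 f2 v0 n ∈ R ∧ ∀ m < n, visit tb f1 f2 v0 m ∉ S

def Win2RichmanSet {V : Type} (tb : TieBreak V) (f1 f2 : Strat V) (v0 : V)
    (R S : Set V) : Prop :=
  (∃ n, visit tb f1 f2 v0 n ∈ S ∧ ∀ m < n, visit tb f1 f2 v0 m ∉ R) ∨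
  (∀ n, visit tb f1 f2 v0 n ∉ R ∧ visit tb f1 f2 v0 n ∉ S)

/-- `t` is a threshold budget at `v` in the Richman game with target sets `R` and `S`. -/
def IsThreshRichmanSet {V : Type} [Fintype V] (G : BiddingGame V) (R S : Set V)
    (v : V) (t : ℝ) : Prop :=
  (∀ B : ℝ, B ≤ 1 → t < B → ∀ tb : TieBreak V, ∃ f1 : Strat V, Legal1 G f1 B ∧
      ∀ f2 : Strat V, Legal2 G f2 (1 - B) → Win1RichmanSet tb f1 f2 v R S) ∧
  (∀ B : ℝ, B ≤ 1 → 1 - t < B → ∀ tb : TieBreak V, ∃ f2 : Strat V, Legal2 G f2 B ∧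
      ∀ f1 : Strat V, Legal1 G f1 (1 - B) → Win2RichmanSet tb f1 f2 v R S)

/-! ### Reachability games -/

/-- `t` is a threshold budget at `v` in the reachability game with target set `T`. -/
def IsThreshReach {V : Type} [Fintype V] (G : BiddingGame V) (T : Set V) (v : V)
    (t : ℝ) : Prop :=
  (∀ B : ℝ, B ≤ 1 → t < B → ∀ tb : TieBreak V, ∃ f1 : Strat V, Legal1 G f1 B ∧
      ∀ f2 : Strat V, Legal2 G f2 (1 - B) → ∃ n, visit tb f1 f2 v n ∈ T) ∧
  (∀ B : ℝ, B ≤ 1 → 1 - t < B → ∀ tb : TieBreak V, ∃ f2 : Strat V, Legal2 G f2 B ∧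
      ∀ f1 : Strat V, Legal1 G f1 (1 - B) → ∀ n, visit tb f1 f2 v n ∉ T)

/-! ### Parity games -/

/-- Player 1 wins an outcome of a parity game: the maximal parity index visited
infinitely often is odd. -/
def Win1Parity {V : Type} (p : V → ℕ) (tb : TieBreak V) (f1 f2 : Strat V)
    (v0 : V) : Prop :=
  Odd (sSup {k : ℕ | ∀ N : ℕ, ∃ n ≥ N, p (visit tb f1 f2 v0 n) = k})

def Win1ParityFrom {V : Type} [Fintype V] (G : BiddingGame V) (p : V → ℕ) (v0 : V)
    (B : ℝ) : Prop :=
  ∀ tb : TieBreak V, ∃ f1 : Strat V, Legal1 G f1 B ∧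
    ∀ f2 : Strat V, Legal2 G f2 (1 - B) → Win1Parity p tb f1 f2 v0

def Win2ParityFrom {V : Type} [Fintype V] (G : BiddingGame V) (p : V → ℕ) (v0 : V)
    (B : ℝ) : Prop :=
  ∀ tb : TieBreak V, ∃ f2 : Strat V, Legal2 G f2 B ∧
    ∀ f1 : Strat V, Legal1 G f1 (1 - B) → ¬ Win1Parity p tb f1 f2 v0

/-- `t` is a threshold budget at `v` in the parity game. -/
def IsThreshParity {V : Type} [Fintype V] (G : BiddingGame V) (p : V → ℕ) (v : V)
    (t : ℝ) : Prop :=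
  (∀ B : ℝ, B ≤ 1 → t < B → Win1ParityFrom G p v B) ∧
  (∀ B : ℝ, B ≤ 1 → 1 - t < B → Win2ParityFrom G p v B)

/-! ### Mean-payoff games (Min is Player 1, Max is Player 2) -/

/-- The mean-payoff value of the outcome. -/
noncomputable def mpval {V : Type} (w : V → ℤ) (tb : TieBreak V) (f1 f2 : Strat V)
    (v0 : V) : ℝ :=
  Filter.liminf (fun n : ℕ => (energy w tb f1 f2 v0 n : ℝ) / n) Filter.atTop

/-- Min can guarantee a nonpositive mean-payoff value from `v0` with budget `B`. -/
def MinWinsFrom {V : Type} [Fintype V] (G : BiddingGame V) (w : V → ℤ) (v0 : V)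
    (B : ℝ) : Prop :=
  ∀ tb : TieBreak V, ∃ f1 : Strat V, Legal1 G f1 B ∧
    ∀ f2 : Strat V, Legal2 G f2 (1 - B) → mpval w tb f1 f2 v0 ≤ 0

/-- Max can guarantee a strictly positive mean-payoff value from `v0` with budget `B`. -/
def MaxWinsFrom {V : Type} [Fintype V] (G : BiddingGame V) (w : V → ℤ) (v0 : V)
    (B : ℝ) : Prop :=
  ∀ tb : TieBreak V, ∃ f2 : Strat V, Legal2 G f2 B ∧
    ∀ f1 : Strat V, Legal1 G f1 (1 - B) → 0 < mpval w tb f1 f2 v0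

/-- `t` is a threshold budget at `v` in the mean-payoff game. -/
def IsThreshMP {V : Type} [Fintype V] (G : BiddingGame V) (w : V → ℤ) (v : V)
    (t : ℝ) : Prop :=
  (∀ B : ℝ, B ≤ 1 → t < B → MinWinsFrom G w v B) ∧
  (∀ B : ℝ, B ≤ 1 → 1 - t < B → MaxWinsFrom G w v B)

/-! ### The split graph `G^u` and the weighted Richman function -/

/-- Edges of `G^u`: `u` is split into `u_s = Sum.inl u` (keeping the outgoing edges of
`u`, with no incoming edges) and `u_t = Sum.inr ()` (receiving the edges into `u`, with
no outgoing edges). -/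
def splitE {V : Type} [Fintype V] (G : BiddingGame V) (u : V) :
    V ⊕ Unit → V ⊕ Unit → Prop
  | Sum.inl v, Sum.inl x => G.E v x ∧ x ≠ u
  | Sum.inl v, Sum.inr _ => G.E v u
  | Sum.inr _, _ => False

/-- The successors in `G^u` of a vertex `v ∈ V` (i.e. of `Sum.inl v`). -/
noncomputable def succu {V : Type} [Fintype V] (G : BiddingGame V) (u v : V) :
    Finset (V ⊕ Unit) :=
  Finset.univ.filter (fun y => splitE G u (Sum.inl v) y)

lemma succu_nonempty {V : Type} [Fintype V] (G : BiddingGame V) (u v : V) :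
    (succu G u v).Nonempty := by
  obtain ⟨x, hx⟩ := G.total v
  by_cases hxu : x = u
  · refine ⟨Sum.inr (), ?_⟩
    simp only [succu, Finset.mem_filter, Finset.mem_univ, true_and]
    exact show G.E v u from hxu ▸ hx
  · refine ⟨Sum.inl x, ?_⟩
    simp only [succu, Finset.mem_filter, Finset.mem_univ, true_and]
    exact show G.E v x ∧ x ≠ u from ⟨hx, hxu⟩

/-- `W(v⁺)`: the maximal value of `W` over the `G^u`-successors of `v`. -/
noncomputable def supWu {V : Type} [Fintype V] (G : BiddingGame V) (u : V)
    (W : V ⊕ Unit → ℝ) (v : V) : ℝ :=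
  (succu G u v).sup' (succu_nonempty G u v) W

/-- `W(v⁻)`: the minimal value of `W` over the `G^u`-successors of `v`. -/
noncomputable def infWu {V : Type} [Fintype V] (G : BiddingGame V) (u : V)
    (W : V ⊕ Unit → ℝ) (v : V) : ℝ :=
  (succu G u v).inf' (succu_nonempty G u v) W

/-- `W` is a weighted Richman function for the weights `w`, split at `u`:
`W(u_t) = 0` and `W(v) = (W(v⁺) + W(v⁻))/2 + w(v)` for every `v ∈ V`
(`Sum.inl v` represents `v`, in particular `Sum.inl u` is `u_s`). -/
def IsWRichman {V : Type} [Fintype V] (G : BiddingGame V) (w : V → ℝ) (u : V)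
    (W : V ⊕ Unit → ℝ) : Prop :=
  W (Sum.inr ()) = 0 ∧
  ∀ v : V, W (Sum.inl v) = (supWu G u W v + infWu G u W v) / 2 + w v

/-- Projection of `G^u`-vertices back to vertices of `G`. -/
def projU {V : Type} (u : V) : V ⊕ Unit → V := Sum.elim id (fun _ => u)

/-- `w_M`: the maximal absolute value of `W` over `V`. -/
noncomputable def wMax {V : Type} [Fintype V] (W : V ⊕ Unit → ℝ) (u : V) : ℝ :=
  Finset.univ.sup' ⟨u, Finset.mem_univ u⟩ (fun v : V => |W (Sum.inl v)|)

/-- `b_M`: the maximal value of the bid `(W(v⁺) − W(v⁻))/2` over `V`. -/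
noncomputable def bMax {V : Type} [Fintype V] (G : BiddingGame V) (u : V)
    (W : V ⊕ Unit → ℝ) : ℝ :=
  Finset.univ.sup' ⟨u, Finset.mem_univ u⟩
    (fun v : V => (supWu G u W v - infWu G u W v) / 2)

/-! ### Richman plans -/

/-- A potential `val` on the vertices together with a move `next` lowering it by `gap`, while
no edge raises it by more than `gap`; wherever `val` is below `1`, following `next` leads to
`U`. -/
structure RichmanPlan {V : Type} [Fintype V] (G : BiddingGame V) (U : Set V) where
  val : V → ℝ
  gap : V → ℝ
  depth : V → ℕ
  next : V → V
  val_nonneg : ∀ v, 0 ≤ val v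
  gap_nonneg : ∀ v, 0 ≤ gap v
  edge_next : ∀ v, G.E v (next v)
  val_next : ∀ v, val (next v) = val v - gap v
  val_le : ∀ v w, G.E v w → val w ≤ val v + gap v
  depth_next : ∀ v, val v < 1 → v ∉ U → depth (next v) < depth v

/-- The fraction of the surplus that is bid at distance `k` from the target. -/
noncomputable def surplusRate (k : ℕ) : ℝ :=
  2 * (1 / 4) ^ k / (1 + 4 * (1 / 4) ^ k)

lemma surplusRate_nonneg (k : ℕ) : 0 ≤ surplusRate k := by
  unfold surplusRate; positivity

lemma surplusRate_lt_one (k : ℕ) : surplusRate k < 1 := by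
  unfold surplusRate
  have h : (0 : ℝ) < (1 / 4) ^ k := by positivity
  rw [div_lt_one (by positivity)]
  linarith

/-- Winning a bidding at distance `k` increases the weighted surplus. -/
lemma surplusRate_win {k l D : ℕ} (hl : l < k) (hD : k ≤ D) :
    (1 + (1 / 4 : ℝ) ^ D / 2) * (1 + (1 / 4) ^ k) ≤ (1 - surplusRate k) * (1 + (1 / 4) ^ l) := by
  have hy : (0 : ℝ) < (1 / 4) ^ k := by positivity
  have hy1 : (1 / 4 : ℝ) ^ k ≤ 1 := pow_le_one₀ (by norm_num) (by norm_num)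
  have hz : (1 / 4 : ℝ) ^ D ≤ (1 / 4) ^ k :=
    pow_le_pow_of_le_one (by norm_num) (by norm_num) hD
  have hw : 4 * (1 / 4 : ℝ) ^ k ≤ (1 / 4) ^ l := by
    have : (1 / 4 : ℝ) ^ k ≤ (1 / 4) ^ (l + 1) :=
      pow_le_pow_of_le_one (by norm_num) (by norm_num) hl
    rw [pow_succ] at this
    linarith
  have hr : (1 - surplusRate k) * (1 + 4 * (1 / 4) ^ k) = 1 + 2 * (1 / 4) ^ k := by
    unfold surplusRate
    field_simp
    ring
  have h1 : (1 - surplusRate k) * (1 + 4 * (1 / 4) ^ k) ≤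
      (1 - surplusRate k) * (1 + (1 / 4) ^ l) :=
    mul_le_mul_of_nonneg_left (by linarith) (by linarith [surplusRate_lt_one k])
  rw [hr] at h1
  nlinarith

/-- Losing a bidding at distance `k ≥ 1` increases the weighted surplus, wherever the token
is moved. -/
lemma surplusRate_lose {k l D : ℕ} (hk : 0 < k) (hl : l ≤ D) :
    (1 + (1 / 4 : ℝ) ^ D / 2) * (1 + (1 / 4) ^ k) ≤ (1 + surplusRate k) * (1 + (1 / 4) ^ l) := by
  have hy : (0 : ℝ) < (1 / 4) ^ k := by positivity
  have hz0 : (0 : ℝ) < (1 / 4) ^ D := by positivity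
  have hy1 : (1 / 4 : ℝ) ^ k ≤ 1 / 4 := by
    simpa using pow_le_pow_of_le_one (a := (1 / 4 : ℝ)) (by norm_num) (by norm_num) hk
  have hz : (1 / 4 : ℝ) ^ D ≤ (1 / 4) ^ l :=
    pow_le_pow_of_le_one (by norm_num) (by norm_num) hl
  have hr : 1 + (1 / 4 : ℝ) ^ k ≤ 1 + surplusRate k := by
    have : (1 / 4 : ℝ) ^ k ≤ surplusRate k := by
      unfold surplusRate
      rw [le_div_iff₀ (by positivity)]
      nlinarith
    linarith
  calc (1 + (1 / 4 : ℝ) ^ D / 2) * (1 + (1 / 4) ^ k)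
      = (1 + (1 / 4) ^ k) * (1 + (1 / 4 : ℝ) ^ D / 2) := mul_comm _ _
    _ ≤ (1 + surplusRate k) * (1 + (1 / 4) ^ l) := by
      apply mul_le_mul hr <;> linarith [surplusRate_nonneg k]

namespace RichmanPlan

variable {V : Type} [Fintype V] {G : BiddingGame V} {U : Set V} (P : RichmanPlan G U)

/-- The bid at vertex `v` with budget `β`. -/
noncomputable def bid (v : V) (β : ℝ) : ℝ :=
  if P.val v < β then P.gap v + surplusRate (P.depth v) * (β - P.val v) else 0

lemma bid_of_lt {v : V} {β : ℝ} (h : P.val v < β) :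
    P.bid v β = P.gap v + surplusRate (P.depth v) * (β - P.val v) := if_pos h

lemma bid_nonneg (v : V) (β : ℝ) : 0 ≤ P.bid v β := by
  unfold bid
  split_ifs with h
  · have := mul_nonneg (surplusRate_nonneg (P.depth v)) (sub_nonneg.2 h.le)
    linarith [P.gap_nonneg v]
  · exact le_rfl

lemma bid_le {v : V} {β : ℝ} (hβ : 0 ≤ β) : P.bid v β ≤ β := by
  unfold bid
  split_ifs with h
  · have h1 := P.val_nonneg (P.next v)
    rw [P.val_next] at h1
    nlinarith [surplusRate_lt_one (P.depth v)]
  · exact hβ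

/-- A sequence of vertices and budgets in which each bidding is either won or lost against the
plan. -/
def Follows (x : ℕ → V) (β : ℕ → ℝ) : Prop :=
  ∀ n, (x (n + 1) = P.next (x n) ∧ β (n + 1) = β n - P.bid (x n) (β n)) ∨
    (G.E (x n) (x (n + 1)) ∧ β n + P.bid (x n) (β n) ≤ β (n + 1))

variable {P}

lemma Follows.edge {x : ℕ → V} {β : ℕ → ℝ} (h : P.Follows x β) (n : ℕ) :
    G.E (x n) (x (n + 1)) := by
  rcases h n with ⟨h1, -⟩ | ⟨h1, -⟩
  · rw [h1]
    exact P.edge_next _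
  · exact h1

lemma Follows.surplus {x : ℕ → V} {β : ℕ → ℝ} (h : P.Follows x β) {n : ℕ}
    (hn : P.val (x n) < β n) :
    (x (n + 1) = P.next (x n) ∧ (1 - surplusRate (P.depth (x n))) * (β n - P.val (x n)) ≤
        β (n + 1) - P.val (x (n + 1))) ∨
      (1 + surplusRate (P.depth (x n))) * (β n - P.val (x n)) ≤
        β (n + 1) - P.val (x (n + 1)) := by
  rcases h n with ⟨h1, h2⟩ | ⟨h1, h2⟩
  · left
    refine ⟨h1, ?_⟩
    rw [h2, h1, P.val_next, P.bid_of_lt hn]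
    linarith
  · right
    rw [P.bid_of_lt hn] at h2
    linarith [P.val_le _ _ h1]

lemma Follows.val_lt {x : ℕ → V} {β : ℕ → ℝ} (h : P.Follows x β) (h0 : P.val (x 0) < β 0)
    (n : ℕ) : P.val (x n) < β n := by
  induction n with
  | zero => exact h0
  | succ n ih =>
    have hs : 0 < β n - P.val (x n) := sub_pos.2 ih
    rcases h.surplus ih with ⟨-, h1⟩ | h1
    · have := mul_pos (sub_pos.2 (surplusRate_lt_one (P.depth (x n)))) hs
      linarith
    · have := mul_nonneg (surplusRate_nonneg (P.depth (x n))) hs.le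
      linarith

theorem Follows.infinitely_often {x : ℕ → V} {β : ℕ → ℝ} (h : P.Follows x β)
    (h0 : P.val (x 0) < β 0) (hβ : ∀ n, β n ≤ 1) (N : ℕ) : ∃ n ≥ N, x n ∈ U := by
  by_contra! hU
  obtain ⟨D, hD⟩ : ∃ D, ∀ v, P.depth v ≤ D :=
    ⟨Finset.univ.sup P.depth, fun v => Finset.le_sup (Finset.mem_univ v)⟩
  set Q : ℕ → ℝ := fun n => (β n - P.val (x n)) * (1 + (1 / 4) ^ P.depth (x n)) with hQ
  have hpos : ∀ n, 0 < β n - P.val (x n) := fun n => sub_pos.2 (h.val_lt h0 n)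
  have hstep : ∀ n ≥ N, (1 + (1 / 4 : ℝ) ^ D / 2) * Q n ≤ Q (n + 1) := by
    intro n hn
    have hd : P.depth (P.next (x n)) < P.depth (x n) :=
      P.depth_next _ ((h.val_lt h0 n).trans_le (hβ n)) (hU n hn)
    have hM : (0 : ℝ) ≤ 1 + (1 / 4) ^ P.depth (x (n + 1)) := by positivity
    rcases h.surplus (h.val_lt h0 n) with ⟨h1, h2⟩ | h2
    · have h3 := surplusRate_win hd (hD (x n))
      rw [← h1] at h3
      have h4 := mul_le_mul_of_nonneg_left h3 (hpos n).le
      have h5 := mul_le_mul_of_nonneg_right h2 hM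
      simp only [hQ]
      linarith
    · have h3 := surplusRate_lose (lt_of_le_of_lt (Nat.zero_le _) hd) (hD (x (n + 1)))
      have h4 := mul_le_mul_of_nonneg_left h3 (hpos n).le
      have h5 := mul_le_mul_of_nonneg_right h2 hM
      simp only [hQ]
      linarith
  have hgrow : ∀ k, (1 + (1 / 4 : ℝ) ^ D / 2) ^ k * Q N ≤ Q (N + k) := by
    intro k
    induction k with
    | zero => simp
    | succ k ih =>
      have h1 := hstep (N + k) (Nat.le_add_right _ _)
      have h2 := mul_le_mul_of_nonneg_left ih (by positivity : (0 : ℝ) ≤ 1 + (1 / 4) ^ D / 2)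
      rw [pow_succ, ← add_assoc]
      linarith
  have hbound : ∀ n, Q n ≤ 2 := by
    intro n
    have h1 : β n - P.val (x n) ≤ 1 := by linarith [hβ n, P.val_nonneg (x n)]
    have h2 : (1 / 4 : ℝ) ^ P.depth (x n) ≤ 1 := pow_le_one₀ (by norm_num) (by norm_num)
    have h3 : (0 : ℝ) < (1 / 4) ^ P.depth (x n) := by positivity
    simp only [hQ]
    nlinarith [hpos n]
  have hQN : 0 < Q N := mul_pos (hpos N) (by positivity)
  obtain ⟨k, hk⟩ := pow_unbounded_of_one_lt (2 / Q N)
    (by linarith [show (0 : ℝ) < (1 / 4) ^ D by positivity] : 1 < 1 + (1 / 4 : ℝ) ^ D / 2)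
  rw [div_lt_iff₀ hQN] at hk
  linarith [hgrow k, hbound (N + k)]

end RichmanPlan

/-! ### Playing a plan -/

lemma Hist.cur_concat {V : Type} (v : V) (l : List (BidRound V)) (r : BidRound V) :
    (⟨v, l ++ [r]⟩ : Hist V).cur = r.dest := by
  simp [Hist.cur]

lemma Hist.pay1_concat {V : Type} (v : V) (l : List (BidRound V)) (r : BidRound V) :
    (⟨v, l ++ [r]⟩ : Hist V).pay1 =
      (⟨v, l⟩ : Hist V).pay1 + if r.p1Won then r.bid else -r.bid := by
  simp [Hist.pay1]

lemma play_succ_cases {V : Type} (tb : TieBreak V) (f1 f2 : Strat V) (v0 : V) (n : ℕ) :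
    let h := play tb f1 f2 v0 n
    let h' := play tb f1 f2 v0 (n + 1)
    (h'.cur = (f1 h).2 ∧ h'.pay1 = h.pay1 + (f1 h).1 ∧ (f2 h).1 ≤ (f1 h).1) ∨
      (h'.cur = (f2 h).2 ∧ h'.pay1 = h.pay1 - (f2 h).1 ∧ (f1 h).1 ≤ (f2 h).1) := by
  intro h h'
  have hh : h' = extend tb f1 f2 h := rfl
  unfold extend at hh
  split_ifs at hh with hc
  · left
    rw [hh, Hist.cur_concat, Hist.pay1_concat]
    refine ⟨rfl, by simp, ?_⟩
    rcases hc with hc | hc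
    · exact hc.le
    · exact hc.1.ge
  · right
    rw [hh, Hist.cur_concat, Hist.pay1_concat]
    refine ⟨rfl, by simp [sub_eq_add_neg], ?_⟩
    push Not at hc
    exact hc.1

lemma play_zero_pay1 {V : Type} (tb : TieBreak V) (f1 f2 : Strat V) (v0 : V) :
    (play tb f1 f2 v0 0).pay1 = 0 := by
  simp [play, Hist.pay1]

namespace RichmanPlan

variable {V : Type} [Fintype V] {G : BiddingGame V} {U : Set V} (P : RichmanPlan G U)

/-- Player 1's strategy following the plan with initial budget `B`. -/
noncomputable def strat1 (B : ℝ) : Strat V :=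
  fun h => (P.bid h.cur (B - h.pay1), P.next h.cur)

/-- Player 2's strategy following the plan with initial budget `B`. -/
noncomputable def strat2 (B : ℝ) : Strat V :=
  fun h => (P.bid h.cur (B - h.pay2), P.next h.cur)

lemma memoryless_strat1 (B : ℝ) : Memoryless (P.strat1 B) := by
  intro h h' h1 h2
  simp only [strat1, h1, h2]

lemma memoryless_strat2 (B : ℝ) : Memoryless (P.strat2 B) := by
  intro h h' h1 h2
  simp only [strat2, Hist.pay2, h1, h2]

lemma legal1_strat1 {B : ℝ} (hB : 0 ≤ B) : Legal1 G (P.strat1 B) B := by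
  intro tb f2 v0 n
  have key : 0 ≤ B - (play tb (P.strat1 B) f2 v0 n).pay1 := by
    induction n with
    | zero => simpa [play_zero_pay1] using hB
    | succ n ih =>
      rcases play_succ_cases tb (P.strat1 B) f2 v0 n with ⟨-, h1, -⟩ | ⟨-, h1, h2⟩
      · rw [h1]
        have := P.bid_le (v := (play tb (P.strat1 B) f2 v0 n).cur) ih
        simp only [strat1] at this ⊢
        linarith
      · have := P.bid_nonneg (play tb (P.strat1 B) f2 v0 n).cur
          (B - (play tb (P.strat1 B) f2 v0 n).pay1)
        rw [h1]
        simp only [strat1] at this h2 ⊢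
        linarith
  exact ⟨P.bid_nonneg _ _, P.bid_le key, P.edge_next _⟩

lemma legal2_strat2 {B : ℝ} (hB : 0 ≤ B) : Legal2 G (P.strat2 B) B := by
  intro tb f1 v0 n
  have key : 0 ≤ B - (play tb f1 (P.strat2 B) v0 n).pay2 := by
    induction n with
    | zero => simpa [Hist.pay2, play_zero_pay1] using hB
    | succ n ih =>
      rcases play_succ_cases tb f1 (P.strat2 B) v0 n with ⟨-, h1, h2⟩ | ⟨-, h1, -⟩
      · have := P.bid_nonneg (play tb f1 (P.strat2 B) v0 n).cur
          (B - (play tb f1 (P.strat2 B) v0 n).pay2)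
        simp only [strat2, Hist.pay2] at this h1 h2 ih ⊢
        rw [h1]
        linarith
      · have := P.bid_le (v := (play tb f1 (P.strat2 B) v0 n).cur) ih
        simp only [strat2, Hist.pay2] at this h1 ih ⊢
        rw [h1]
        linarith
  exact ⟨P.bid_nonneg _ _, P.bid_le key, P.edge_next _⟩

lemma follows_strat1 {B : ℝ} (tb : TieBreak V) {f2 : Strat V} (hf : Legal2 G f2 (1 - B))
    (v0 : V) : P.Follows (visit tb (P.strat1 B) f2 v0)
      (fun n => B - (play tb (P.strat1 B) f2 v0 n).pay1) := by
  intro n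
  rcases play_succ_cases tb (P.strat1 B) f2 v0 n with ⟨h0, h1, -⟩ | ⟨h0, h1, h2⟩
  · refine Or.inl ⟨h0, ?_⟩
    simp only [h1, strat1, visit]
    ring
  · refine Or.inr ⟨?_, ?_⟩
    · have := (hf tb (P.strat1 B) v0 n).2.2
      rwa [← h0] at this
    · simp only [h1, visit]
      simp only [strat1] at h2 ⊢
      linarith

lemma follows_strat2 {B : ℝ} (tb : TieBreak V) {f1 : Strat V} (hf : Legal1 G f1 (1 - B))
    (v0 : V) : P.Follows (visit tb f1 (P.strat2 B) v0)
      (fun n => B - (play tb f1 (P.strat2 B) v0 n).pay2) := by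
  intro n
  rcases play_succ_cases tb f1 (P.strat2 B) v0 n with ⟨h0, h1, h2⟩ | ⟨h0, h1, -⟩
  · refine Or.inr ⟨?_, ?_⟩
    · have := (hf tb (P.strat2 B) v0 n).2.2
      rwa [← h0] at this
    · simp only [h1, visit, Hist.pay2]
      simp only [strat2, Hist.pay2] at h2 ⊢
      linarith
  · refine Or.inl ⟨h0, ?_⟩
    simp only [h1, strat2, visit, Hist.pay2]
    ring

theorem strat1_infinitely_often {B : ℝ} (tb : TieBreak V) {f2 : Strat V}
    (hf : Legal2 G f2 (1 - B)) {v0 : V} (hB : P.val v0 < B) (N : ℕ) :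
    ∃ n ≥ N, visit tb (P.strat1 B) f2 v0 n ∈ U := by
  refine (P.follows_strat1 tb hf v0).infinitely_often ?_ (fun n => ?_) N
  · simpa [visit, play, Hist.cur, Hist.pay1] using hB
  · obtain ⟨h1, h2, -⟩ := hf tb (P.strat1 B) v0 n
    simp only [Hist.pay2] at h2
    linarith

theorem strat2_infinitely_often {B : ℝ} (tb : TieBreak V) {f1 : Strat V}
    (hf : Legal1 G f1 (1 - B)) {v0 : V} (hB : P.val v0 < B) (N : ℕ) :
    ∃ n ≥ N, visit tb f1 (P.strat2 B) v0 n ∈ U := by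
  refine (P.follows_strat2 tb hf v0).infinitely_often ?_ (fun n => ?_) N
  · simpa [visit, play, Hist.cur, Hist.pay1, Hist.pay2] using hB
  · obtain ⟨h1, h2, -⟩ := hf tb (P.strat2 B) v0 n
    simp only [Hist.pay2]
    linarith

end RichmanPlan

/-! ### Bottom strongly connected components -/

/-- `u` lies in a bottom strongly connected component and has the largest parity index there. -/
def BottomMax {V : Type} [Fintype V] (G : BiddingGame V) (p : V → ℕ) (u : V) : Prop :=
  ∀ w, Relation.ReflTransGen G.E u w → Relation.ReflTransGen G.E w u ∧ p w ≤ p u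

lemma exists_bottomMax {V : Type} [Fintype V] (G : BiddingGame V) (p : V → ℕ) (v : V) :
    ∃ u, Relation.ReflTransGen G.E v u ∧ BottomMax G p u := by
  obtain ⟨y, hvy, hy⟩ := Set.exists_min_image {y | Relation.ReflTransGen G.E v y}
    (fun y => {z | Relation.ReflTransGen G.E y z}.ncard) (Set.toFinite _) ⟨v, .refl⟩
  have hback : ∀ z, Relation.ReflTransGen G.E y z → Relation.ReflTransGen G.E z y := by
    intro z hz
    have hsub : {w | Relation.ReflTransGen G.E z w} ⊆ {w | Relation.ReflTransGen G.E y w} :=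
      fun w hw => hz.trans hw
    have heq := Set.eq_of_subset_of_ncard_le hsub (hy z (Relation.ReflTransGen.trans hvy hz))
    have : y ∈ {w | Relation.ReflTransGen G.E y w} := Relation.ReflTransGen.refl
    rwa [← heq] at this
  obtain ⟨u, hyu, hu⟩ := Set.exists_max_image {u | Relation.ReflTransGen G.E y u} p
    (Set.toFinite _) ⟨y, .refl⟩
  refine ⟨u, Relation.ReflTransGen.trans hvy hyu, fun w hw => ?_⟩
  have hyw := Relation.ReflTransGen.trans hyu hw
  exact ⟨(hback w hyw).trans hyu, hu w hyw⟩

lemma BottomMax.parity_eq {V : Type} [Fintype V] {G : BiddingGame V} {p : V → ℕ} {u u' v : V}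
    (hu : BottomMax G p u) (hu' : BottomMax G p u') (h : Relation.ReflTransGen G.E u v)
    (h' : Relation.ReflTransGen G.E u' v) : p u = p u' :=
  le_antisymm (hu' u (h'.trans (hu v h).1)).2 (hu u' (h.trans (hu' v h').1)).2

lemma sSup_parity_of_infinitely_often {V : Type} [Fintype V] {G : BiddingGame V} {p : V → ℕ}
    {q : ℕ → Prop} {x : ℕ → V} (hE : ∀ n, G.E (x n) (x (n + 1)))
    (h : ∀ N, ∃ n ≥ N, x n ∈ {u | BottomMax G p u ∧ q (p u)}) :
    q (sSup {k : ℕ | ∀ N : ℕ, ∃ n ≥ N, p (x n) = k}) := by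
  obtain ⟨n0, -, hu, hq⟩ := h 0
  have hreach : ∀ n ≥ n0, Relation.ReflTransGen G.E (x n0) (x n) := by
    intro n hn
    induction n, hn using Nat.le_induction with
    | base => exact .refl
    | succ n _ ih => exact ih.tail (hE n)
  have hg : IsGreatest {k : ℕ | ∀ N : ℕ, ∃ n ≥ N, p (x n) = k} (p (x n0)) := by
    constructor
    · intro N
      obtain ⟨n, hn, hn1, -⟩ := h (max N n0)
      exact ⟨n, (le_max_left _ _).trans hn,
        (hu.parity_eq hn1 (hreach n ((le_max_right _ _).trans hn)) .refl).symm⟩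
    · intro k hk
      obtain ⟨n, hn, rfl⟩ := hk n0
      exact (hu _ (hreach n hn)).2
  rwa [hg.csSup_eq]

/-! ### The Richman potential -/

/-- At every vertex, `T` is the mean of its largest and smallest values on successors. -/
def IsRichmanPotential {V : Type} [Fintype V] (G : BiddingGame V) (T : V → ℝ) : Prop :=
  ∀ v, ∃ b, 0 ≤ b ∧ (∃ w, G.E v w ∧ T w = T v - b) ∧ (∃ w, G.E v w ∧ T w = T v + b) ∧
    ∀ w, G.E v w → T v - b ≤ T w ∧ T w ≤ T v + b

lemma IsRichmanPotential.one_sub {V : Type} [Fintype V] {G : BiddingGame V} {T : V → ℝ}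
    (hT : IsRichmanPotential G T) : IsRichmanPotential G (fun v => 1 - T v) := by
  intro v
  obtain ⟨b, hb, ⟨w, hw, hw'⟩, ⟨z, hz, hz'⟩, h⟩ := hT v
  refine ⟨b, hb, ⟨z, hz, by linarith⟩, ⟨w, hw, by linarith⟩, fun y hy => ?_⟩
  have := h y hy
  constructor <;> linarith

/-- A monotone operator whose fixed points are Richman potentials. -/
noncomputable def richmanStep {V : Type} [Fintype V] (G : BiddingGame V) (R1 R2 : Set V)
    (T : V → ℝ) (v : V) : ℝ :=
  if v ∈ R1 then 0 else if v ∈ R2 then 1 else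
    ((G.adj v).sup' (G.adj_nonempty v) T + (G.adj v).inf' (G.adj_nonempty v) T) / 2

lemma richmanStep_mono {V : Type} [Fintype V] (G : BiddingGame V) (R1 R2 : Set V) :
    Monotone (richmanStep G R1 R2) := by
  intro T T' h v
  unfold richmanStep
  split_ifs
  · exact le_rfl
  · exact le_rfl
  · have h1 := Finset.sup'_mono_fun (hs := G.adj_nonempty v) (fun w _ => h w)
    have h2 := Finset.inf'_mono_fun (hs := G.adj_nonempty v) (fun w _ => h w)
    linarith

lemma richmanStep_mem {V : Type} [Fintype V] (G : BiddingGame V) (R1 R2 : Set V) {T : V → ℝ}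
    (hT : ∀ v, T v ∈ Set.Icc (0 : ℝ) 1) (v : V) :
    richmanStep G R1 R2 T v ∈ Set.Icc (0 : ℝ) 1 := by
  unfold richmanStep
  split_ifs
  · simp
  · simp
  · obtain ⟨w, -, hw⟩ := Finset.exists_mem_eq_sup' (G.adj_nonempty v) T
    obtain ⟨z, -, hz⟩ := Finset.exists_mem_eq_inf' (G.adj_nonempty v) T
    rw [hw, hz]
    have h1 := hT w
    have h2 := hT z
    constructor <;> linarith [h1.1, h1.2, h2.1, h2.2]

lemma exists_richmanStep_fixed {V : Type} [Fintype V] (G : BiddingGame V) (R1 R2 : Set V) :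
    ∃ T : V → ℝ, (∀ v, T v ∈ Set.Icc (0 : ℝ) 1) ∧ richmanStep G R1 R2 T = T := by
  let F : (V → Set.Icc (0 : ℝ) 1) →o (V → Set.Icc (0 : ℝ) 1) :=
    { toFun := fun T v => ⟨richmanStep G R1 R2 (fun w => T w) v,
        richmanStep_mem G R1 R2 (fun w => (T w).2) v⟩
      monotone' := fun T T' h v => richmanStep_mono G R1 R2 (fun w => h w) v }
  refine ⟨fun v => F.lfp v, fun v => (F.lfp v).2, ?_⟩
  funext v
  exact congrArg Subtype.val (congrFun F.map_lfp v)

lemma exists_isRichmanPotential {V : Type} [Fintype V] (G : BiddingGame V) {R1 R2 : Set V}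
    (h1 : ∀ v w, v ∈ R1 → G.E v w → w ∈ R1) (h2 : ∀ v w, v ∈ R2 → G.E v w → w ∈ R2)
    (hd : Disjoint R1 R2) :
    ∃ T : V → ℝ, (∀ v, T v ∈ Set.Icc (0 : ℝ) 1) ∧ IsRichmanPotential G T ∧
      (∀ v ∈ R1, T v = 0) ∧ ∀ v ∈ R2, T v = 1 := by
  obtain ⟨T, hT, hfix⟩ := exists_richmanStep_fixed G R1 R2
  have hT1 : ∀ v ∈ R1, T v = 0 := by
    intro v hv
    rw [← hfix]
    simp [richmanStep, hv]
  have hT2 : ∀ v ∈ R2, T v = 1 := by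
    intro v hv
    rw [← hfix]
    simp [richmanStep, hv, hd.notMem_of_mem_right hv]
  have hconst : ∀ v, (∀ w, G.E v w → T w = T v) →
      ∃ b, 0 ≤ b ∧ (∃ w, G.E v w ∧ T w = T v - b) ∧ (∃ w, G.E v w ∧ T w = T v + b) ∧
        ∀ w, G.E v w → T v - b ≤ T w ∧ T w ≤ T v + b := by
    intro v hv
    obtain ⟨u, hu⟩ := G.total v
    refine ⟨0, le_rfl, ⟨u, hu, by simp [hv u hu]⟩, ⟨u, hu, by simp [hv u hu]⟩, fun w hw => ?_⟩
    simp [hv w hw]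
  refine ⟨T, hT, fun v => ?_, hT1, hT2⟩
  by_cases hv1 : v ∈ R1
  · exact hconst v fun w hw => by rw [hT1 v hv1, hT1 w (h1 v w hv1 hw)]
  by_cases hv2 : v ∈ R2
  · exact hconst v fun w hw => by rw [hT2 v hv2, hT2 w (h2 v w hv2 hw)]
  have hv : ((G.adj v).sup' (G.adj_nonempty v) T + (G.adj v).inf' (G.adj_nonempty v) T) / 2
      = T v := by
    conv_rhs => rw [← hfix]
    simp [richmanStep, hv1, hv2]
  have hadj : ∀ w, w ∈ G.adj v ↔ G.E v w := fun w => by simp [BiddingGame.adj]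
  obtain ⟨w, hw, hw'⟩ := Finset.exists_mem_eq_sup' (G.adj_nonempty v) T
  obtain ⟨z, hz, hz'⟩ := Finset.exists_mem_eq_inf' (G.adj_nonempty v) T
  have hzw : T z ≤ T w := hw' ▸ Finset.le_sup' T hz
  rw [hw', hz'] at hv
  refine ⟨(T w - T z) / 2, by linarith, ⟨z, (hadj z).1 hz, by linarith⟩,
    ⟨w, (hadj w).1 hw, by linarith⟩, fun y hy => ?_⟩
  have hy1 : T y ≤ T w := hw' ▸ Finset.le_sup' T ((hadj y).2 hy)
  have hy2 : T z ≤ T y := hz' ▸ Finset.inf'_le T ((hadj y).2 hy)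
  constructor <;> linarith

/-- `U` is reached from `v` in exactly `n` steps of `A`. -/
def ReachesIn {V : Type} (A : V → V → Prop) (U : Set V) : ℕ → V → Prop
  | 0, v => v ∈ U
  | n + 1, v => ∃ w, A v w ∧ ReachesIn A U n w

lemma exists_reachesIn {V : Type} {A : V → V → Prop} {U : Set V} {v u : V}
    (h : Relation.ReflTransGen A v u) (hu : u ∈ U) : ∃ n, ReachesIn A U n v := by
  induction h using Relation.ReflTransGen.head_induction_on with
  | refl => exact ⟨0, hu⟩
  | head h _ ih =>
    obtain ⟨n, hn⟩ := ih
    exact ⟨n + 1, _, h, hn⟩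

/-- A Richman potential yields a plan when every vertex reaches a vertex of `U`, or one where
the potential is `1`. -/
theorem IsRichmanPotential.exists_plan {V : Type} [Fintype V] {G : BiddingGame V} {T : V → ℝ}
    (hT : IsRichmanPotential G T) (h0 : ∀ v, 0 ≤ T v) {U : Set V}
    (hU : ∀ v, ∃ u, Relation.ReflTransGen G.E v u ∧ (u ∈ U ∨ T u = 1)) :
    ∃ P : RichmanPlan G U, P.val = T := by
  choose b hb hdown _ hbd using hT
  let A : V → V → Prop := fun v w => G.E v w ∧ T w = T v - b v
  have hreach : ∀ v, T v < 1 → ∃ n, ReachesIn A U n v := by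
    intro v hv
    obtain ⟨x, hvx, hx⟩ := Set.exists_min_image {x | Relation.ReflTransGen A v x} T
      (Set.toFinite _) ⟨v, .refl⟩
    obtain ⟨u, hxu, hu⟩ := hU x
    have hmin : Relation.ReflTransGen A v u ∧ T u = T x := by
      clear hu
      induction hxu with
      | refl => exact ⟨hvx, rfl⟩
      | @tail y z _ hyz ih =>
        obtain ⟨hvy, hy⟩ := ih
        obtain ⟨w, hw⟩ := hdown y
        have h1 := hx w (hvy.tail hw)
        have hb0 : b y = 0 := le_antisymm (by linarith [hw.2]) (hb y)
        have h2 := hbd y z hyz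
        have hz : T z = T y := by
          rw [hb0] at h2
          linarith
        exact ⟨hvy.tail ⟨hyz, by rw [hz, hb0, sub_zero]⟩, hz.trans hy⟩
    refine exists_reachesIn hmin.1 (hu.resolve_right ?_)
    have := hx v .refl
    linarith [hmin.2]
  let d : V → ℕ := fun v => sInf {n | ReachesIn A U n v}
  have hnext : ∀ v, ∃ w, A v w ∧ (T v < 1 → v ∉ U → d w < d v) := by
    intro v
    by_cases hv : T v < 1 ∧ v ∉ U
    · have hd : ReachesIn A U (d v) v := Nat.sInf_mem (hreach v hv.1)
      obtain ⟨k, hk⟩ : ∃ k, d v = k + 1 := by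
        refine Nat.exists_eq_succ_of_ne_zero fun h => hv.2 ?_
        rwa [h] at hd
      rw [hk] at hd
      obtain ⟨w, hw, hkw⟩ := hd
      refine ⟨w, hw, fun _ _ => ?_⟩
      rw [hk]
      exact Nat.lt_succ_of_le (Nat.sInf_le hkw)
    · obtain ⟨w, hw⟩ := hdown v
      exact ⟨w, hw, fun h1 h2 => absurd ⟨h1, h2⟩ hv⟩
  choose m hm hmd using hnext
  exact ⟨{ val := T, gap := b, depth := d, next := m, val_nonneg := h0, gap_nonneg := hb
           edge_next := fun v => (hm v).1, val_next := fun v => (hm v).2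
           val_le := fun v w h => (hbd v w h).2, depth_next := hmd }, rfl⟩

/-- Both players have plans, for complementary potentials, for reaching the favourable vertices
of maximal parity index of the bottom strongly connected components. -/
theorem exists_parity_plans {V : Type} [Fintype V] (G : BiddingGame V) (p : V → ℕ) :
    ∃ (P1 : RichmanPlan G {u | BottomMax G p u ∧ Odd (p u)})
      (P2 : RichmanPlan G {u | BottomMax G p u ∧ ¬ Odd (p u)}),
      ∀ v, P2.val v = 1 - P1.val v := by
  let R : (ℕ → Prop) → Set V :=
    fun q => {v | ∃ u, (BottomMax G p u ∧ q (p u)) ∧ Relation.ReflTransGen G.E u v}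
  have hclosed : ∀ q v w, v ∈ R q → G.E v w → w ∈ R q := by
    rintro q v w ⟨u, hu, huv⟩ hvw
    exact ⟨u, hu, huv.tail hvw⟩
  have hself : ∀ q u, BottomMax G p u → q (p u) → u ∈ R q := fun q u h h' => ⟨u, ⟨h, h'⟩, .refl⟩
  have hdisj : Disjoint (R Odd) (R fun k => ¬ Odd k) := by
    rw [Set.disjoint_left]
    rintro v ⟨u, ⟨hu, ho⟩, huv⟩ ⟨u', ⟨hu', he⟩, huv'⟩
    exact he (hu.parity_eq hu' huv huv' ▸ ho)
  obtain ⟨T, hT, hR, hT1, hT2⟩ :=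
    exists_isRichmanPotential G (hclosed Odd) (hclosed fun k => ¬ Odd k) hdisj
  obtain ⟨P1, hP1⟩ := hR.exists_plan (U := {u | BottomMax G p u ∧ Odd (p u)})
    (fun v => (hT v).1) fun v => by
      obtain ⟨u, hvu, hu⟩ := exists_bottomMax G p v
      refine ⟨u, hvu, ?_⟩
      by_cases ho : Odd (p u)
      · exact Or.inl ⟨hu, ho⟩
      · exact Or.inr (hT2 u (hself (fun k => ¬ Odd k) u hu ho))
  obtain ⟨P2, hP2⟩ := hR.one_sub.exists_plan (U := {u | BottomMax G p u ∧ ¬ Odd (p u)})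
    (fun v => sub_nonneg.2 (hT v).2) fun v => by
      obtain ⟨u, hvu, hu⟩ := exists_bottomMax G p v
      refine ⟨u, hvu, ?_⟩
      by_cases ho : Odd (p u)
      · exact Or.inr (by rw [hT1 u (hself _ u hu ho), sub_zero])
      · exact Or.inl ⟨hu, ho⟩
  exact ⟨P1, P2, fun v => by rw [hP1, hP2]⟩

/-- In a parity bidding game, each player has a *memoryless* winning
strategy whenever his budget exceeds his threshold budget: Player 1 when his budget
exceeds `Thresh(v) = t`, Player 2 when his budget exceeds `Thresh₂(v) = 1 - t`. -/
theorem parity_memoryless_winning_strategies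
    {V : Type} [Fintype V] (G : BiddingGame V) (p : V → ℕ) (v : V) (t : ℝ)
    (ht : IsThreshParity G p v t) :
    (∀ B : ℝ, B ≤ 1 → t < B → ∀ tb : TieBreak V,
      ∃ f1 : Strat V, Memoryless f1 ∧ Legal1 G f1 B ∧
        ∀ f2 : Strat V, Legal2 G f2 (1 - B) → Win1Parity p tb f1 f2 v) ∧
    (∀ B : ℝ, B ≤ 1 → 1 - t < B → ∀ tb : TieBreak V,
      ∃ f2 : Strat V, Memoryless f2 ∧ Legal2 G f2 B ∧
        ∀ f1 : Strat V, Legal1 G f1 (1 - B) → ¬ Win1Parity p tb f1 f2 v) := by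
  obtain ⟨P1, P2, hP⟩ := exists_parity_plans G p
  have win1 : ∀ B : ℝ, P1.val v < B → ∀ (tb : TieBreak V) (f2 : Strat V),
      Legal2 G f2 (1 - B) → Win1Parity p tb (P1.strat1 B) f2 v := fun B hB tb f2 hf =>
    sSup_parity_of_infinitely_often (P1.follows_strat1 tb hf v).edge
      (P1.strat1_infinitely_often tb hf hB)
  have win2 : ∀ B : ℝ, P2.val v < B → ∀ (tb : TieBreak V) (f1 : Strat V),
      Legal1 G f1 (1 - B) → ¬ Win1Parity p tb f1 (P2.strat2 B) v := fun B hB tb f1 hf =>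
    sSup_parity_of_infinitely_often (q := fun k => ¬ Odd k) (P2.follows_strat2 tb hf v).edge
      (P2.strat2_infinitely_often tb hf hB)
  have h0 := P1.val_nonneg v
  have h1 := P2.val_nonneg v
  have hPv := hP v
  have tb0 : TieBreak V := fun _ => true
  have hle : P1.val v ≤ t := by
    by_contra! hlt
    obtain ⟨B, hB, hB'⟩ := exists_between (max_lt hlt (show P1.val v > 0 by
      by_contra! hz
      obtain ⟨B, hB, hB'⟩ := exists_between (hlt.trans_le hz)
      obtain ⟨f1, hf1, -⟩ := ht.1 B (by linarith) hB tb0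
      obtain ⟨g1, g2, -⟩ := hf1 tb0 f1 v 0
      rw [play_zero_pay1] at g2
      linarith))
    obtain ⟨hB1, hB2⟩ := max_lt_iff.1 hB
    obtain ⟨f1, hf1, hw⟩ := ht.1 B (by linarith) hB1 tb0
    refine win2 (1 - B) (by linarith) tb0 f1 (by simpa using hf1) ?_
    exact hw _ (P2.legal2_strat2 (by linarith))
  have hge : t ≤ P1.val v := by
    by_contra! hlt
    obtain ⟨B, hB, hB'⟩ := exists_between hlt
    obtain ⟨f2, hf2, hw⟩ := ht.2 (1 - B) (by linarith) (by linarith) tb0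
    refine hw (P1.strat1 B) ?_ (win1 B hB tb0 f2 hf2)
    simpa using P1.legal1_strat1 (B := B) (by linarith)
  refine ⟨fun B _ hB tb => ⟨P1.strat1 B, P1.memoryless_strat1 B, P1.legal1_strat1 (by linarith),
    win1 B (by linarith) tb⟩, fun B _ hB tb => ⟨P2.strat2 B, P2.memoryless_strat2 B,
    P2.legal2_strat2 (by linarith), win2 B (by linarith) tb⟩⟩
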